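/- arXiv:0904.1081 — 3 statements merged into one kernel-verified Lean document; each statement's English description precedes it below -/
import Mathlib

section
/- Let A be a unital simple C*-algebra with a unique tracial state τ. Then the fundamental group F(A) is a multiplicative subgroup of the positive reals: every element of F(A) is strictly positive, 1 ∈ F(A), F(A) is closed under multiplication, and F(A) is closed under taking inverses. -/
open scoped Matrix ComplexOrder

section CommonDefs

variable (A : Type*) [CStarAlgebra A]

/-- `τ` is a tracial state on the unital C*-algebra `A`. -/
structure IsTracialState (τ : A →ₗ[ℂ] ℂ) : Prop where
  map_one : τ 1 = 1
  nonneg : ∀ a : A, 0 ≤ τ (star a * a)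
  tracial : ∀ a b : A, τ (a * b) = τ (b * a)

/-- `A` is simple: every closed two-sided ideal is trivial. -/
def IsSimpleCStarAlgebra : Prop :=
  ∀ I : TwoSidedIdeal A, IsClosed (I : Set A) → I = ⊥ ∨ I = ⊤

/-- `φ` is a *-isomorphism from `A` onto the corner `p Mₙ(A) p`. -/
def IsCornerIso {n : ℕ} (p : Matrix (Fin n) (Fin n) A)
    (φ : A → Matrix (Fin n) (Fin n) A) : Prop :=
  Function.Injective φ ∧
  (∀ a b : A, φ (a + b) = φ a + φ b) ∧
  (∀ a b : A, φ (a * b) = φ a * φ b) ∧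
  (∀ (c : ℂ) (a : A), φ (c • a) = c • φ a) ∧
  (∀ a : A, φ (star a) = star (φ a)) ∧
  Set.range φ = {x : Matrix (Fin n) (Fin n) A | p * x * p = x}

/-- The fundamental group of a unital simple C*-algebra with unique tracial state `τ`:
the set of values `(τ ⊗ Tr)(p)` over projections `p ∈ Mₙ(A)` whose corner `p Mₙ(A) p`
is *-isomorphic to `A`. -/
def fundamentalGroup (τ : A →ₗ[ℂ] ℂ) : Set ℝ :=
  {t : ℝ | ∃ (n : ℕ) (p : Matrix (Fin n) (Fin n) A), 0 < n ∧
    p * p = p ∧ star p = p ∧ (∃ φ, IsCornerIso A p φ) ∧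
    (∑ i, τ (p i i)) = (t : ℂ)}

end CommonDefs

/-! A corner isomorphism `A ≅ p Mₙ(A) p` is an injective non-unital `*`-homomorphism
`φ : A → Mₙ(A)` with `φ 1 = p` whose range is the whole corner of `φ 1`. Uniqueness of `τ` forces
`(τ ⊗ Tr) ∘ φ = t • τ` with `t = (τ ⊗ Tr)(φ 1)`, so the amplification `M_m(A) → M_{mn}(A)` of `φ`
multiplies traces by `t`. Composing it with a second corner embedding `A → M_m(A)` gives products.

For inverses, simplicity yields a column `w` over `A` with `w* w = 1` and `(1 ⊗ p) w = w`. The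
corner embedding `a ↦ w a w*` then takes values in the corner of `1 ⊗ p`, hence factors through
the amplification of `φ` via a corner embedding `ψ : A → M_N(A)`. Since `w w*` has trace
`τ (w* w) = 1`, the trace of `ψ 1` is `t⁻¹`; this equation also shows `t ≠ 0`. -/

section CornerEmbedding

variable {R A B C : Type*} [Monoid R] [Semiring A] [Star A] [DistribMulAction R A]
  [Semiring B] [Star B] [DistribMulAction R B]
  [NonUnitalSemiring C] [Star C] [DistribMulAction R C]

/-- A non-unital `*`-homomorphism which is an isomorphism from its unital domain onto the corner
`φ 1 * C * φ 1` of its codomain. The range always lies in that corner, so only the converse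
inclusion is recorded. -/
structure IsCornerEmbedding (φ : A →⋆ₙₐ[R] C) : Prop where
  injective : Function.Injective φ
  mem_range_of_mul_mul_eq_self : ∀ x, φ 1 * x * φ 1 = x → x ∈ Set.range φ

theorem isCornerEmbedding_toNonUnitalStarAlgHom (e : A ≃⋆ₐ[R] B) :
    IsCornerEmbedding e.toNonUnitalStarAlgHom where
  injective := e.injective
  mem_range_of_mul_mul_eq_self x _ := e.surjective x

namespace IsCornerEmbedding

theorem comp {ψ : B →⋆ₙₐ[R] C} {φ : A →⋆ₙₐ[R] B} (hψ : IsCornerEmbedding ψ)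
    (hφ : IsCornerEmbedding φ) : IsCornerEmbedding (ψ.comp φ) where
  injective := hψ.injective.comp hφ.injective
  mem_range_of_mul_mul_eq_self x hx := by
    replace hx : ψ (φ 1) * x * ψ (φ 1) = x := hx
    obtain ⟨y, rfl⟩ : x ∈ Set.range ψ := hψ.mem_range_of_mul_mul_eq_self x <| calc
      ψ 1 * x * ψ 1 = ψ 1 * ψ (φ 1) * x * (ψ (φ 1) * ψ 1) := by
        conv_lhs => rw [← hx]
        simp only [mul_assoc]
      _ = x := by simp only [← map_mul, one_mul, mul_one, hx]
    simp only [← map_mul] at hx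
    obtain ⟨a, rfl⟩ := hφ.mem_range_of_mul_mul_eq_self y (hψ.injective hx)
    exact ⟨a, rfl⟩

theorem exists_comp_eq {θ : B →⋆ₙₐ[R] C} {χ : A →⋆ₙₐ[R] C} (hθ : IsCornerEmbedding θ)
    (hχ : IsCornerEmbedding χ) (h : θ 1 * χ 1 * θ 1 = χ 1) :
    ∃ ψ : A →⋆ₙₐ[R] B, IsCornerEmbedding ψ ∧ θ.comp ψ = χ := by
  have hθ_idem : θ 1 * θ 1 = θ 1 := by rw [← map_mul, one_mul]
  have hleft : θ 1 * χ 1 = χ 1 := by rw [← h, ← mul_assoc, ← mul_assoc, hθ_idem]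
  have hright : χ 1 * θ 1 = χ 1 := by rw [← h, mul_assoc, hθ_idem]
  have hrange (a : A) : ∃ b, θ b = χ a := hθ.mem_range_of_mul_mul_eq_self _ <| calc
    θ 1 * χ a * θ 1 = (θ 1 * χ 1) * χ a * (χ 1 * θ 1) := by
      conv_lhs => rw [← one_mul a, ← mul_one (1 * a), map_mul, map_mul]
      simp only [mul_assoc]
    _ = χ a := by rw [hleft, hright, ← map_mul, ← map_mul, one_mul, mul_one]
  choose f hf using hrange
  let ψ : A →⋆ₙₐ[R] B :=
    { toFun := f
      map_smul' := fun r a => hθ.injective (by simp [hf])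
      map_zero' := hθ.injective (by simp [hf])
      map_add' := fun a b => hθ.injective (by simp [hf])
      map_mul' := fun a b => hθ.injective (by simp [hf])
      map_star' := fun a => hθ.injective (by simp [hf, map_star]) }
  have hψ (a : A) : θ (ψ a) = χ a := hf a
  refine ⟨ψ, ⟨fun a b hab => hχ.injective ?_, fun y hy => ?_⟩, NonUnitalStarAlgHom.ext hψ⟩
  · rw [← hψ, hab, hψ]
  · obtain ⟨a, ha⟩ := hχ.mem_range_of_mul_mul_eq_self (θ y) (by
      rw [← hψ, ← map_mul, ← map_mul, hy])
    exact ⟨a, hθ.injective ((hψ a).trans ha)⟩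

end IsCornerEmbedding

end CornerEmbedding

section MatrixStarHom

open scoped Kronecker

variable {R A B C ι κ : Type*} [CommSemiring R] [Semiring A] [StarRing A] [Algebra R A]
  [Semiring B] [StarRing B] [Algebra R B] [NonUnitalSemiring C] [StarRing C] [Module R C]
  [Fintype ι] [Fintype κ]

/-- `Matrix.reindexAlgEquiv` as a `*`-isomorphism. -/
def reindexStarAlgEquiv (R A : Type*) [CommSemiring R] [Semiring A] [StarRing A] [Algebra R A]
    (e : ι ≃ κ) : Matrix ι ι A ≃⋆ₐ[R] Matrix κ κ A where
  toFun := Matrix.reindex e e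
  invFun := Matrix.reindex e.symm e.symm
  left_inv x := by simp
  right_inv x := by simp
  map_add' _ _ := rfl
  map_mul' x y := (Matrix.submatrix_mul_equiv x y _ _ _).symm
  map_star' _ := rfl
  map_smul' _ _ := rfl

/-- The `*`-isomorphism of an algebra with its algebra of one by one matrices. -/
def toMatrixUnitStarAlgEquiv (R A : Type*) [CommSemiring R] [Semiring A] [StarRing A]
    [Algebra R A] : A ≃⋆ₐ[R] Matrix Unit Unit A where
  toFun a := Matrix.of fun _ _ => a
  invFun x := x () ()
  left_inv _ := rfl
  right_inv _ := rfl
  map_add' _ _ := rfl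
  map_mul' a b := by ext; simp [Matrix.mul_apply]
  map_star' _ := rfl
  map_smul' _ _ := rfl

/-- `Matrix.compAlgEquiv` as a `*`-isomorphism. -/
def compStarAlgEquiv (ι κ R A : Type*) [Fintype ι] [Fintype κ] [CommSemiring R] [Semiring A]
    [StarRing A] [Algebra R A] :
    Matrix ι ι (Matrix κ κ A) ≃⋆ₐ[R] Matrix (ι × κ) (ι × κ) A where
  __ := Matrix.compRingEquiv ι κ A
  map_star' _ := rfl
  map_smul' _ _ := rfl

/-- Entrywise application of a non-unital `*`-homomorphism to square matrices. -/
def mapMatrixStarHom (ι : Type*) [Fintype ι] (φ : A →⋆ₙₐ[R] C) :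
    Matrix ι ι A →⋆ₙₐ[R] Matrix ι ι C where
  toFun x := x.map φ
  map_smul' r x := by ext; simp
  map_zero' := by ext; simp
  map_add' x y := by ext; simp
  map_mul' x y := by ext; simp [Matrix.mul_apply]
  map_star' x := by ext; simp [Matrix.star_apply, map_star]

/-- The amplification `id ⊗ φ : M_ι(A) → M_ι(M_κ(B)) = M_{ι × κ}(B)` of `φ : A → M_κ(B)`. -/
def amplify (ι : Type*) [Fintype ι] (φ : A →⋆ₙₐ[R] Matrix κ κ B) :
    Matrix ι ι A →⋆ₙₐ[R] Matrix (ι × κ) (ι × κ) B :=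
  (compStarAlgEquiv ι κ R B).toNonUnitalStarAlgHom.comp (mapMatrixStarHom ι φ)

/-- The `*`-homomorphism `x ↦ v x v*` attached to a rectangular isometry `v`. -/
def conjIsometry (R : Type*) {A ι κ : Type*} [CommSemiring R] [Semiring A] [StarRing A]
    [Algebra R A] [Fintype ι] [Fintype κ] [DecidableEq ι] (v : Matrix κ ι A) (hv : vᴴ * v = 1) :
    Matrix ι ι A →⋆ₙₐ[R] Matrix κ κ A where
  toFun x := v * x * vᴴ
  map_smul' r x := by simp
  map_zero' := by simp
  map_add' x y := by simp [Matrix.mul_add, Matrix.add_mul]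
  map_mul' x y := calc
    v * (x * y) * vᴴ = v * x * ((1 : Matrix ι ι A) * (y * vᴴ)) := by
      simp only [Matrix.mul_assoc, Matrix.one_mul]
    _ = v * x * vᴴ * (v * y * vᴴ) := by
      rw [← hv]
      simp only [Matrix.mul_assoc]
  map_star' x := by simp [Matrix.star_eq_conjTranspose, Matrix.mul_assoc]

theorem isCornerEmbedding_mapMatrixStarHom [DecidableEq ι] {φ : A →⋆ₙₐ[R] C}
    (hφ : IsCornerEmbedding φ) : IsCornerEmbedding (mapMatrixStarHom ι φ) where
  injective := Matrix.map_injective hφ.injective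
  mem_range_of_mul_mul_eq_self X hX := by
    have hone : mapMatrixStarHom ι φ 1 = Matrix.diagonal fun _ => φ 1 := by
      change Matrix.map 1 φ = _
      rw [← Matrix.diagonal_one, Matrix.diagonal_map (map_zero φ)]
    have hentry (i j : ι) : ∃ a, φ a = X i j := hφ.mem_range_of_mul_mul_eq_self _ <| by
      conv_rhs => rw [← hX, hone, Matrix.mul_diagonal, Matrix.diagonal_mul]
    choose y hy using hentry
    exact ⟨Matrix.of y, Matrix.ext hy⟩

theorem isCornerEmbedding_amplify [DecidableEq ι] {φ : A →⋆ₙₐ[R] Matrix κ κ B}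
    (hφ : IsCornerEmbedding φ) : IsCornerEmbedding (amplify ι φ) := by
  classical
  exact (isCornerEmbedding_toNonUnitalStarAlgHom _).comp (isCornerEmbedding_mapMatrixStarHom hφ)

theorem amplify_one [DecidableEq ι] (φ : A →⋆ₙₐ[R] Matrix κ κ B) :
    amplify ι φ 1 = (1 : Matrix ι ι B) ⊗ₖ φ 1 := by
  ext ⟨i, k⟩ ⟨j, l⟩
  change φ ((1 : Matrix ι ι A) i j) k l = (1 : Matrix ι ι B) i j * φ 1 k l
  obtain rfl | hij := eq_or_ne i j <;> simp [*]

theorem trace_amplify (φ : A →⋆ₙₐ[R] Matrix κ κ B) (x : Matrix ι ι A) :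
    (amplify ι φ x).trace = (φ x.trace).trace := calc
  (amplify ι φ x).trace = ∑ i, (φ (x i i)).trace := Fintype.sum_prod_type _
  _ = (φ (∑ i, x i i)).trace := by rw [map_sum, Matrix.trace_sum]

theorem conjIsometry_apply [DecidableEq ι] {v : Matrix κ ι A} (hv : vᴴ * v = 1)
    (x : Matrix ι ι A) : conjIsometry R v hv x = v * x * vᴴ :=
  rfl

theorem isCornerEmbedding_conjIsometry [DecidableEq ι] {v : Matrix κ ι A} (hv : vᴴ * v = 1) :
    IsCornerEmbedding (conjIsometry R v hv) := by
  refine ⟨Function.LeftInverse.injective (g := fun y => vᴴ * y * v) fun x => ?_,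
    fun y hy => ⟨vᴴ * y * v, ?_⟩⟩
  · calc
      vᴴ * conjIsometry R v hv x * v = (vᴴ * v) * x * (vᴴ * v) := by
        simp only [conjIsometry_apply, Matrix.mul_assoc]
      _ = x := by rw [hv, Matrix.one_mul, Matrix.mul_one]
  · rw [conjIsometry_apply, Matrix.mul_one] at hy
    rw [conjIsometry_apply]
    simpa only [Matrix.mul_assoc] using hy

end MatrixStarHom

section SimpleRing

/-- The closure of a two-sided ideal in a topological ring. -/
def twoSidedIdealClosure {R : Type*} [Ring R] [TopologicalSpace R] [IsTopologicalRing R]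
    (I : TwoSidedIdeal R) : TwoSidedIdeal R :=
  .mk' (closure I) (subset_closure I.zero_mem)
    (fun hx hy => map_mem_closure₂ continuous_add hx hy fun _ ha _ hb => I.add_mem ha hb)
    (fun hx => map_mem_closure continuous_neg hx fun _ => I.neg_mem)
    (fun {x _} hy => map_mem_closure (continuous_const_mul x) hy fun a => I.mul_mem_left x a)
    (fun {_ y} hx =>
      map_mem_closure (f := (· * y)) (continuous_mul_const y) hx fun a => I.mul_mem_right a y)

theorem coe_twoSidedIdealClosure {R : Type*} [Ring R] [TopologicalSpace R] [IsTopologicalRing R]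
    (I : TwoSidedIdeal R) : (twoSidedIdealClosure I : Set R) = closure I :=
  TwoSidedIdeal.coe_mk' _ _ _ _ _ _

theorem IsSimpleCStarAlgebra.isSimpleRing {A : Type*} [CStarAlgebra A] [Nontrivial A]
    (hA : IsSimpleCStarAlgebra A) : IsSimpleRing A := by
  refine .of_eq_bot_or_eq_top fun I => ?_
  have hcoe := coe_twoSidedIdealClosure I
  have hclosed : IsClosed (twoSidedIdealClosure I : Set A) := hcoe ▸ isClosed_closure
  refine (hA _ hclosed).imp (fun hbot => ?_) fun htop => ?_
  · refine le_bot_iff.1 (hbot ▸ ?_)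
    rw [← SetLike.coe_subset_coe, hcoe]
    exact subset_closure
  · -- The units form an open set, so a dense ideal contains one of them.
    have hone : (1 : A) ∈ closure (I : Set A) := hcoe ▸ htop ▸ trivial
    obtain ⟨_, ⟨u, rfl⟩, hu⟩ := mem_closure_iff.1 hone _ Units.isOpen isUnit_one
    have : (1 : A) ∈ I := by simpa using I.mul_mem_left (↑u⁻¹) _ hu
    exact (I.one_mem_iff).1 this

theorem exists_sum_mul_mul_eq_one {R : Type*} [Ring R] [IsSimpleRing R] {b : R} (hb : b ≠ 0) :
    ∃ (n : ℕ) (x y : Fin n → R), ∑ i, x i * b * y i = 1 := by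
  open scoped Pointwise in
  have hone : (1 : R) ∈ AddSubgroup.closure (Set.univ * {b} * Set.univ) :=
    TwoSidedIdeal.mem_span_iff_mem_addSubgroup_closure.1 <|
      IsSimpleRing.one_mem_of_ne_zero_mem _ hb (TwoSidedIdeal.subset_span rfl)
  generalize (1 : R) = z at hone ⊢
  induction hone using AddSubgroup.closure_induction with
  | mem z hz =>
    obtain ⟨_, ⟨x, -, _, rfl, rfl⟩, y, -, rfl⟩ := hz
    exact ⟨1, fun _ => x, fun _ => y, by simp⟩
  | zero => exact ⟨0, 0, 0, by simp⟩
  | add z z' _ _ hz hz' =>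
    obtain ⟨n, x, y, rfl⟩ := hz
    obtain ⟨n', x', y', rfl⟩ := hz'
    exact ⟨n + n', Fin.append x x', Fin.append y y', by simp [Fin.sum_univ_add]⟩
  | neg z _ hz =>
    obtain ⟨n, x, y, rfl⟩ := hz
    exact ⟨n, -x, y, by simp⟩

end SimpleRing

section Isometry

open scoped Kronecker

variable {A : Type*} [CStarAlgebra A] [IsSimpleRing A]

theorem exists_sum_star_mul_mul_eq_one [PartialOrder A] [StarOrderedRing A] {b : A} (hb : 0 ≤ b)
    (hb0 : b ≠ 0) : ∃ (n : ℕ) (x : Fin n → A), ∑ i, star (x i) * b * x i = 1 := by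
  obtain ⟨n, x, y, hxy⟩ := exists_sum_mul_mul_eq_one hb0
  have hyx : ∑ i, star (y i) * b * star (x i) = 1 := by
    simpa [hb.isSelfAdjoint.star_eq, mul_assoc] using congrArg star hxy
  -- Polarization: the cross terms of `(x* + y)* b (x* + y)` and `(x* - y)* b (x* - y)` differ by 4.
  let h := ∑ i, star (star (x i) + y i) * b * (star (x i) + y i)
  let d := ∑ i, star (star (x i) - y i) * b * (star (x i) - y i)
  have hd : 0 ≤ d := Finset.sum_nonneg fun i _ => star_left_conjugate_nonneg hb _
  have hhd : h = 4 + d := by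
    have hterm (i : Fin n) : star (star (x i) + y i) * b * (star (x i) + y i) -
        star (star (x i) - y i) * b * (star (x i) - y i) =
          2 * (x i * b * y i) + 2 * (star (y i) * b * star (x i)) := by
      simp only [star_add, star_sub, star_star]
      noncomm_ring
    rw [← sub_eq_iff_eq_add, ← Finset.sum_sub_distrib]
    simp only [hterm, Finset.sum_add_distrib, ← Finset.mul_sum, hxy, hyx]
    norm_num
  have hfour : IsStrictlyPositive (4 : A) := by
    simpa only [map_ofNat] using isStrictlyPositive_algebraMap (A := A) (four_pos (α := ℝ))
  have hpos : IsStrictlyPositive h := hhd ▸ hfour.add_nonneg hd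
  let r : A := h ^ (-(1 / 2) : ℝ)
  have hr : star r = r := CFC.rpow_nonneg.isSelfAdjoint.star_eq
  refine ⟨n, fun i => (star (x i) + y i) * r, ?_⟩
  calc
    _ = r * h * r := by simp only [h, star_mul, hr, Finset.mul_sum, Finset.sum_mul, mul_assoc]
    _ = 1 := CFC.conjugate_rpow_neg_one_half h hpos

theorem exists_isometry_one_kronecker_mul {ι κ : Type*} [Fintype ι] [Fintype κ] {X : Matrix ι κ A}
    (hX : X ≠ 0) : ∃ (n : ℕ) (Y : Matrix (Fin n × κ) Unit A),
      (((1 : Matrix (Fin n) (Fin n) A) ⊗ₖ X) * Y)ᴴ * (((1 : Matrix (Fin n) (Fin n) A) ⊗ₖ X) * Y)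
        = 1 := by
  classical
  let _ := CStarAlgebra.spectralOrder A
  have := CStarAlgebra.spectralOrderedRing A
  obtain ⟨k, l, hkl⟩ : ∃ k l, X k l ≠ 0 := by
    by_contra! h
    exact hX (Matrix.ext h)
  have hnonneg (i : ι) : 0 ≤ star (X i l) * X i l := star_mul_self_nonneg _
  obtain ⟨n, x, hx⟩ := exists_sum_star_mul_mul_eq_one (b := ∑ i, star (X i l) * X i l)
    (Finset.sum_nonneg fun i _ => hnonneg i) fun h => hkl <| CStarRing.star_mul_self_eq_zero_iff _
      |>.1 <| (Finset.sum_eq_zero_iff_of_nonneg fun i _ => hnonneg i).1 h k (Finset.mem_univ k)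
  let Y : Matrix (Fin n × κ) Unit A := Matrix.of fun jk _ => if jk.2 = l then x jk.1 else 0
  have hXY (j : Fin n) (i : ι) :
      (((1 : Matrix (Fin n) (Fin n) A) ⊗ₖ X) * Y) (j, i) () = X i l * x j := by
    simp [Y, Matrix.mul_apply, Fintype.sum_prod_type, Matrix.one_apply]
  refine ⟨n, Y, Matrix.ext fun _ _ => ?_⟩
  simp only [Matrix.mul_apply (M := Matrix.conjTranspose _), Matrix.conjTranspose_apply,
    Fintype.sum_prod_type, hXY, Matrix.one_apply_eq, ← hx, Finset.mul_sum, Finset.sum_mul,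
    star_mul, mul_assoc]

end Isometry

section Trace

variable {A ι κ : Type*} [CStarAlgebra A] {τ : A →ₗ[ℂ] ℂ} [Fintype ι] [Fintype κ]

namespace IsTracialState

theorem nontrivial (hτ : IsTracialState A τ) : Nontrivial A :=
  ⟨1, 0, fun h => by simpa [h] using hτ.map_one⟩

theorem map_trace_mul_comm (hτ : IsTracialState A τ) (X : Matrix ι κ A) (Y : Matrix κ ι A) :
    τ (X * Y).trace = τ (Y * X).trace := by
  simp only [Matrix.trace, Matrix.diag_apply, Matrix.mul_apply, map_sum]
  rw [Finset.sum_comm]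
  simp only [hτ.tracial]

theorem map_trace_conjTranspose_mul_self_nonneg (hτ : IsTracialState A τ) (X : Matrix κ ι A) :
    0 ≤ τ (Xᴴ * X).trace := by
  simp only [Matrix.trace, Matrix.diag_apply, Matrix.mul_apply, map_sum,
    Matrix.conjTranspose_apply]
  exact Finset.sum_nonneg fun i _ => Finset.sum_nonneg fun j _ => hτ.nonneg _

/-- No Cauchy–Schwarz inequality is needed to treat `σ 1 = 0`: `(τ + σ) / (1 + σ 1)` is always a
tracial state. -/
theorem eq_map_one_smul_of_unique (hτ : IsTracialState A τ)
    (huniq : ∀ σ : A →ₗ[ℂ] ℂ, IsTracialState A σ → σ = τ) {σ : A →ₗ[ℂ] ℂ}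
    (hpos : ∀ a, 0 ≤ σ (star a * a)) (htr : ∀ a b, σ (a * b) = σ (b * a)) : σ = σ 1 • τ := by
  have hone : 0 ≤ σ 1 := by simpa using hpos 1
  have hlt : 0 < 1 + σ 1 := add_pos_of_pos_of_nonneg one_pos hone
  have hstate : IsTracialState A ((1 + σ 1)⁻¹ • (τ + σ)) :=
    { map_one := by simpa [hτ.map_one, mul_add] using inv_mul_cancel₀ hlt.ne'
      nonneg := fun a => mul_nonneg (inv_nonneg.2 hlt.le) (add_nonneg (hτ.nonneg a) (hpos a))
      tracial := fun a b => by simp [hτ.tracial a b, htr a b] }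
  have hsum : τ + σ = (1 + σ 1) • τ := (inv_smul_eq_iff₀ hlt.ne').1 (huniq _ hstate)
  rwa [add_smul, one_smul, add_right_inj] at hsum

theorem map_trace_apply (hτ : IsTracialState A τ)
    (huniq : ∀ σ : A →ₗ[ℂ] ℂ, IsTracialState A σ → σ = τ) (φ : A →⋆ₙₐ[ℂ] Matrix ι ι A) (a : A) :
    τ (φ a).trace = τ (φ 1).trace * τ a := by
  let σ : A →ₗ[ℂ] ℂ := τ ∘ₗ Matrix.traceLinearMap ι ℂ A ∘ₗ (φ : A →ₗ[ℂ] Matrix ι ι A)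
  have hpos (a : A) : 0 ≤ σ (star a * a) := by
    change 0 ≤ τ (φ (star a * a)).trace
    rw [map_mul, map_star]
    exact hτ.map_trace_conjTranspose_mul_self_nonneg (φ a)
  have htr (a b : A) : σ (a * b) = σ (b * a) := by
    change τ (φ (a * b)).trace = τ (φ (b * a)).trace
    rw [map_mul, map_mul, hτ.map_trace_mul_comm]
  exact LinearMap.congr_fun (hτ.eq_map_one_smul_of_unique huniq hpos htr) a

theorem map_trace_amplify (hτ : IsTracialState A τ)
    (huniq : ∀ σ : A →ₗ[ℂ] ℂ, IsTracialState A σ → σ = τ) (φ : A →⋆ₙₐ[ℂ] Matrix κ κ A)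
    (x : Matrix ι ι A) : τ (amplify ι φ x).trace = τ (φ 1).trace * τ x.trace := by
  rw [trace_amplify, hτ.map_trace_apply huniq]

theorem map_trace_apply_one_nonneg (hτ : IsTracialState A τ) (φ : A →⋆ₙₐ[ℂ] Matrix ι ι A) :
    0 ≤ τ (φ 1).trace := by
  have h := hτ.map_trace_conjTranspose_mul_self_nonneg (φ 1)
  rwa [← Matrix.star_eq_conjTranspose, ← map_star, ← map_mul, star_one, one_mul] at h

end IsTracialState

end Trace

section FundamentalGroup

variable {A ι : Type*} [CStarAlgebra A] [Fintype ι] {τ : A →ₗ[ℂ] ℂ} {t : ℝ}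

namespace IsCornerEmbedding

theorem exists_amplify_one_eq_mul_conjTranspose [IsSimpleRing A]
    {φ : A →⋆ₙₐ[ℂ] Matrix ι ι A} (hφ : IsCornerEmbedding φ) :
    ∃ (n : ℕ) (ψ : A →⋆ₙₐ[ℂ] Matrix (Fin n) (Fin n) A) (w : Matrix (Fin n × ι) Unit A),
      IsCornerEmbedding ψ ∧ wᴴ * w = 1 ∧ amplify (Fin n) φ (ψ 1) = w * wᴴ := by
  classical
  have hφ0 : φ 1 ≠ 0 := (map_ne_zero_iff φ hφ.injective).2 one_ne_zero
  obtain ⟨n, Y, hY⟩ := exists_isometry_one_kronecker_mul hφ0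
  rw [← amplify_one] at hY
  let θ := amplify (Fin n) φ
  let w := θ 1 * Y
  let χ : A →⋆ₙₐ[ℂ] Matrix (Fin n × ι) (Fin n × ι) A :=
    (conjIsometry ℂ w hY).comp (toMatrixUnitStarAlgEquiv ℂ A).toNonUnitalStarAlgHom
  have hχ : IsCornerEmbedding χ :=
    (isCornerEmbedding_conjIsometry hY).comp (isCornerEmbedding_toNonUnitalStarAlgHom _)
  have hχ_one : χ 1 = w * wᴴ := by
    change conjIsometry ℂ w hY (toMatrixUnitStarAlgEquiv ℂ A 1) = w * wᴴ
    rw [conjIsometry_apply, map_one, Matrix.mul_one]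
  have hθw : θ 1 * w = w := by
    rw [← Matrix.mul_assoc, ← map_mul, one_mul]
  have hwθ : wᴴ * θ 1 = wᴴ := by
    simpa [← Matrix.star_eq_conjTranspose (θ 1), ← map_star] using
      congrArg Matrix.conjTranspose hθw
  obtain ⟨ψ, hψ, hθψ⟩ := (isCornerEmbedding_amplify hφ).exists_comp_eq hχ (by
    rw [hχ_one, ← Matrix.mul_assoc, hθw, Matrix.mul_assoc, hwθ])
  exact ⟨n, ψ, w, hψ, hY, (DFunLike.congr_fun hθψ 1).trans hχ_one⟩

theorem exists_map_trace_mul_map_trace_eq_one [IsSimpleRing A] (hτ : IsTracialState A τ)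
    (huniq : ∀ σ : A →ₗ[ℂ] ℂ, IsTracialState A σ → σ = τ)
    {φ : A →⋆ₙₐ[ℂ] Matrix ι ι A} (hφ : IsCornerEmbedding φ) :
    ∃ (n : ℕ) (ψ : A →⋆ₙₐ[ℂ] Matrix (Fin n) (Fin n) A),
      IsCornerEmbedding ψ ∧ τ (φ 1).trace * τ (ψ 1).trace = 1 := by
  obtain ⟨n, ψ, w, hψ, hw, hψw⟩ := hφ.exists_amplify_one_eq_mul_conjTranspose
  refine ⟨n, ψ, hψ, ?_⟩
  calc
    τ (φ 1).trace * τ (ψ 1).trace = τ (w * wᴴ).trace := by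
      rw [← hψw, hτ.map_trace_amplify huniq]
    _ = τ (wᴴ * w).trace := hτ.map_trace_mul_comm w wᴴ
    _ = 1 := by simp [hw, hτ.map_one]

theorem isCornerIso {n : ℕ} {φ : A →⋆ₙₐ[ℂ] Matrix (Fin n) (Fin n) A} (hφ : IsCornerEmbedding φ) :
    IsCornerIso A (φ 1) φ := by
  refine ⟨hφ.injective, map_add φ, map_mul φ, map_smul φ, map_star φ,
    Set.Subset.antisymm ?_ hφ.mem_range_of_mul_mul_eq_self⟩
  rintro _ ⟨a, rfl⟩
  simp [← map_mul]

theorem mem_fundamentalGroup [Nontrivial A] {φ : A →⋆ₙₐ[ℂ] Matrix ι ι A}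
    (hφ : IsCornerEmbedding φ) (ht : τ (φ 1).trace = t) : t ∈ fundamentalGroup A τ := by
  classical
  have : Nonempty ι := by
    by_contra hι
    rw [not_nonempty_iff] at hι
    exact zero_ne_one (hφ.injective (Subsingleton.elim (φ 0) (φ 1)))
  let e := Fintype.equivFin ι
  let φ' := (reindexStarAlgEquiv ℂ A e).toNonUnitalStarAlgHom.comp φ
  have hφ' : IsCornerEmbedding φ' := (isCornerEmbedding_toNonUnitalStarAlgHom _).comp hφ
  refine ⟨Fintype.card ι, φ' 1, Fintype.card_pos, by rw [← map_mul, one_mul],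
    by rw [← map_star, star_one], ⟨φ', hφ'.isCornerIso⟩, ?_⟩
  rw [← ht, Matrix.trace, map_sum]
  exact Equiv.sum_comp e.symm fun i => τ (φ 1 i i)

end IsCornerEmbedding

theorem IsCornerIso.exists_isCornerEmbedding {n : ℕ} {p : Matrix (Fin n) (Fin n) A}
    {φ : A → Matrix (Fin n) (Fin n) A} (h : IsCornerIso A p φ) (hp : p * p = p) :
    ∃ φ' : A →⋆ₙₐ[ℂ] Matrix (Fin n) (Fin n) A, IsCornerEmbedding φ' ∧ φ' 1 = p := by
  obtain ⟨hinj, hadd, hmul, hsmul, hstar, hrange⟩ := h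
  let φ' : A →⋆ₙₐ[ℂ] Matrix (Fin n) (Fin n) A :=
    { toFun := φ
      map_smul' := hsmul
      map_zero' := by simpa using hadd 0 0
      map_add' := hadd
      map_mul' := hmul
      map_star' := hstar }
  have hone : φ 1 = p := by
    obtain ⟨e, he⟩ : p ∈ Set.range φ := hrange ▸ (by rw [hp, hp] : p * p * p = p)
    have hcorner : p * φ 1 * p = φ 1 := hrange.subset ⟨1, rfl⟩
    rw [← hcorner]
    nth_rw 1 [← he]
    rw [← hmul, mul_one, he, hp]
  exact ⟨φ', ⟨hinj, fun x hx => hrange.superset (hone ▸ hx)⟩, hone⟩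

theorem exists_isCornerEmbedding_of_mem_fundamentalGroup (ht : t ∈ fundamentalGroup A τ) :
    ∃ (n : ℕ) (φ : A →⋆ₙₐ[ℂ] Matrix (Fin n) (Fin n) A),
      IsCornerEmbedding φ ∧ τ (φ 1).trace = t := by
  obtain ⟨n, p, -, hp, -, ⟨φ, hφ⟩, htr⟩ := ht
  obtain ⟨φ', hφ', rfl⟩ := hφ.exists_isCornerEmbedding hp
  exact ⟨n, φ', hφ', by simpa [Matrix.trace] using htr⟩

end FundamentalGroup

/-- the fundamental group of a unital simple C*-algebra with a unique
tracial state is a multiplicative subgroup of the positive reals. -/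
theorem fundamentalGroup_is_subgroup
    (A : Type*) [CStarAlgebra A]
    (hA : IsSimpleCStarAlgebra A)
    (τ : A →ₗ[ℂ] ℂ) (hτ : IsTracialState A τ)
    (huniq : ∀ σ : A →ₗ[ℂ] ℂ, IsTracialState A σ → σ = τ) :
    (∀ t ∈ fundamentalGroup A τ, 0 < t) ∧
    (1 : ℝ) ∈ fundamentalGroup A τ ∧
    (∀ s t : ℝ, s ∈ fundamentalGroup A τ → t ∈ fundamentalGroup A τ →
      s * t ∈ fundamentalGroup A τ) ∧
    (∀ t ∈ fundamentalGroup A τ, t⁻¹ ∈ fundamentalGroup A τ) := by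
  have := hτ.nontrivial
  have := hA.isSimpleRing
  refine ⟨fun t ht => ?_, ?_, fun s t hs ht => ?_, fun t ht => ?_⟩
  · obtain ⟨n, φ, hφ, hφt⟩ := exists_isCornerEmbedding_of_mem_fundamentalGroup ht
    obtain ⟨m, ψ, -, hinv⟩ := hφ.exists_map_trace_mul_map_trace_eq_one hτ huniq
    have hnonneg : 0 ≤ t := by exact_mod_cast hφt ▸ hτ.map_trace_apply_one_nonneg φ
    refine hnonneg.lt_of_ne' ?_
    rintro rfl
    simp [hφt] at hinv
  · exact (isCornerEmbedding_toNonUnitalStarAlgHom (toMatrixUnitStarAlgEquiv ℂ A))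
      |>.mem_fundamentalGroup (by simp [hτ.map_one])
  · obtain ⟨n, φ, hφ, hφs⟩ := exists_isCornerEmbedding_of_mem_fundamentalGroup hs
    obtain ⟨m, ψ, hψ, hψt⟩ := exists_isCornerEmbedding_of_mem_fundamentalGroup ht
    refine ((isCornerEmbedding_amplify hφ).comp hψ).mem_fundamentalGroup ?_
    simp [hτ.map_trace_amplify huniq, hφs, hψt]
  · obtain ⟨n, φ, hφ, hφt⟩ := exists_isCornerEmbedding_of_mem_fundamentalGroup ht
    obtain ⟨m, ψ, hψ, hinv⟩ := hφ.exists_map_trace_mul_map_trace_eq_one hτ huniq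
    rw [hφt] at hinv
    exact hψ.mem_fundamentalGroup ((eq_inv_of_mul_eq_one_right hinv).trans (by simp))
end

section
/- Let A be a separable unital simple C*-algebra with a unique tracial state τ. Then the fundamental group F(A) is a countable subset of ℝ. -/
open scoped Matrix ComplexOrder

/-!
Nearby idempotents of a Banach ring are conjugate: `z = p q + (1 - p) (1 - q)` satisfies
`z q = p q = p z`, and `z` is close to `1`, hence invertible, when `q` is close to `p`. The
conjugacy classes of idempotents are therefore open in the space of idempotents, and a separable
Banach ring has only countably many of them. This applies to each `Mₙ(A)`, where `τ ⊗ Tr` takes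
equal values on conjugate idempotents, so `τ ⊗ Tr` takes countably many values on projections.
-/

open scoped Topology

section Idempotents

lemma isConj_of_isUnit_mul_add_one_sub_mul_one_sub {R : Type*} [Ring R] {p q : R}
    (hp : IsIdempotentElem p) (hq : IsIdempotentElem q)
    (hz : IsUnit (p * q + (1 - p) * (1 - q))) : IsConj q p := by
  refine ⟨hz.unit, ?_⟩
  calc (p * q + (1 - p) * (1 - q)) * q
    _ = p * q := by
      rw [add_mul, mul_assoc, mul_assoc, hq.eq, hq.one_sub_mul_self, mul_zero, add_zero]
    _ = p * (p * q + (1 - p) * (1 - q)) := by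
      rw [mul_add, ← mul_assoc, ← mul_assoc, hp.eq, hp.mul_one_sub_self, zero_mul, add_zero]

variable {R : Type*} [Ring R] [TopologicalSpace R] [IsTopologicalRing R]

lemma isLocallyConstant_conjClasses_mk_isIdempotentElem (hunits : {x : R | IsUnit x} ∈ 𝓝 1) :
    IsLocallyConstant fun p : {p : R // IsIdempotentElem p} ↦ ConjClasses.mk p.1 := by
  rw [IsLocallyConstant.iff_eventually_eq]
  intro p
  let z (q : {q : R // IsIdempotentElem q}) : R := p.1 * q.1 + (1 - p.1) * (1 - q.1)
  have hzp : z p = 1 := by simp only [z, p.2.eq, p.2.one_sub.eq, add_sub_cancel]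
  have hz : ContinuousAt z p := by fun_prop
  filter_upwards [hz (hzp ▸ hunits)] with q hq
  exact ConjClasses.mk_eq_mk_iff_isConj.2
    (isConj_of_isUnit_mul_add_one_sub_mul_one_sub p.2 q.2 hq)

lemma countable_range_of_isLocallyConstant {X Y : Type*} [TopologicalSpace X]
    [TopologicalSpace.SeparableSpace X] {f : X → Y} (hf : IsLocallyConstant f) :
    (Set.range f).Countable := by
  obtain ⟨s, hs, hsd⟩ := TopologicalSpace.exists_countable_dense X
  refine (hs.image f).mono ?_
  rintro _ ⟨x, rfl⟩
  obtain ⟨y, hys, hyx⟩ := hsd.exists_mem_open (hf.isOpen_fiber (f x)) ⟨x, rfl⟩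
  exact ⟨y, hys, hyx⟩

lemma countable_conjClasses_mk_image_isIdempotentElem [SecondCountableTopology R]
    (hunits : {x : R | IsUnit x} ∈ 𝓝 1) :
    (ConjClasses.mk '' {p : R | IsIdempotentElem p}).Countable := by
  rw [Set.image_eq_range]
  exact countable_range_of_isLocallyConstant
    (isLocallyConstant_conjClasses_mk_isIdempotentElem hunits)

end Idempotents

section MatrixTrace

lemma map_trace_mul_comm {A M m n : Type*} [NonUnitalNonAssocSemiring A] [AddCommMonoid M]
    [Fintype m] [Fintype n] {τ : A →+ M} (hτ : ∀ a b, τ (a * b) = τ (b * a))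
    (x : Matrix m n A) (y : Matrix n m A) : τ (x * y).trace = τ (y * x).trace := by
  simp only [Matrix.trace, Matrix.diag_apply, Matrix.mul_apply, map_sum]
  rw [Finset.sum_comm]
  simp only [hτ]

lemma map_trace_eq_of_isConj {A M n : Type*} [Semiring A] [AddCommMonoid M] [Fintype n]
    [DecidableEq n] {τ : A →+ M} (hτ : ∀ a b, τ (a * b) = τ (b * a)) {x y : Matrix n n A}
    (hxy : IsConj x y) : τ x.trace = τ y.trace := by
  obtain ⟨u, hu⟩ := hxy
  calc τ x.trace = τ ((u⁻¹).val * (u * x)).trace := by rw [Units.inv_mul_cancel_left]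
    _ = τ (u * x * (u⁻¹).val).trace := map_trace_mul_comm hτ _ _
    _ = τ y.trace := by rw [hu.eq, Units.mul_inv_cancel_right]

end MatrixTrace

section BanachRing

variable {A : Type*} [NormedRing A] [CompleteSpace A]

lemma setOf_isUnit_matrix_mem_nhds_one (n : Type*) [Fintype n] [DecidableEq n] :
    {x : Matrix n n A | IsUnit x} ∈ 𝓝 1 := by
  -- The topology of this norm is definitionally the entrywise topology of the statement.
  let : NormedRing (Matrix n n A) := Matrix.linftyOpNormedRing
  have : @CompleteSpace (Matrix n n A) PseudoMetricSpace.toUniformSpace :=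
    inferInstanceAs (CompleteSpace (n → n → A))
  exact Units.nhds 1

theorem countable_map_trace_image_isIdempotentElem [TopologicalSpace.SeparableSpace A]
    {M : Type*} [AddCommMonoid M] {τ : A →+ M} (hτ : ∀ a b, τ (a * b) = τ (b * a))
    (n : Type*) [Fintype n] :
    ((fun p : Matrix n n A ↦ τ p.trace) '' {p | IsIdempotentElem p}).Countable := by
  classical
  have : SecondCountableTopology A := UniformSpace.secondCountable_of_separable A
  have : SecondCountableTopology (Matrix n n A) :=
    inferInstanceAs (SecondCountableTopology (n → n → A))
  let traceOfClass : ConjClasses (Matrix n n A) → M :=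
    Quotient.lift (fun p ↦ τ p.trace) fun _ _ ↦ map_trace_eq_of_isConj hτ
  have hclasses := countable_conjClasses_mk_image_isIdempotentElem
    (setOf_isUnit_matrix_mem_nhds_one (A := A) n)
  exact Set.image_image traceOfClass ConjClasses.mk _ ▸ hclasses.image traceOfClass

end BanachRing

theorem fundamentalGroup_countable_general {A : Type*} [CStarAlgebra A]
    [TopologicalSpace.SeparableSpace A] (τ : A →ₗ[ℂ] ℂ) (hτ : ∀ a b : A, τ (a * b) = τ (b * a)) :
    (fundamentalGroup A τ).Countable := by
  have htraces : (⋃ n : ℕ, (fun p : Matrix (Fin n) (Fin n) A ↦ τ p.trace) ''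
      {p | IsIdempotentElem p}).Countable :=
    Set.countable_iUnion fun n ↦
      countable_map_trace_image_isIdempotentElem (τ := τ.toAddMonoidHom) hτ (Fin n)
  refine (htraces.preimage Complex.ofReal_injective).mono ?_
  rintro t ⟨n, p, -, hp, -, -, ht⟩
  exact Set.mem_iUnion.2 ⟨n, p, hp, (map_sum τ _ _).trans ht⟩

/-- the fundamental group of a separable unital simple C*-algebra with a
unique tracial state is countable. -/
theorem fundamentalGroup_countable
    (A : Type*) [CStarAlgebra A] [TopologicalSpace.SeparableSpace A]
    (hA : IsSimpleCStarAlgebra A)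
    (τ : A →ₗ[ℂ] ℂ) (hτ : IsTracialState A τ)
    (huniq : ∀ σ : A →ₗ[ℂ] ℂ, IsTracialState A σ → σ = τ) :
    (fundamentalGroup A τ).Countable := by
  exact fundamentalGroup_countable_general τ hτ.tracial
end

section
/- Let E be an additive subgroup of ℝ containing ℤ, let G = IM_+(E), and let R_E be the set of all finite ℤ-linear combinations of elements of G (equivalently, the subring of ℝ generated by G). Then R_E is a unital subring of ℝ contained in E, and IM_+(E) equals the group of positive invertible elements of the ring R_E, i.e. IM_+(E) = {t ∈ ℝ : t > 0, t ∈ R_E, t⁻¹ ∈ R_E}. -/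
/-!
Since `1 ∈ E`, the set `G` of positive inner multipliers of `E` consists of the positive units of
the subring `M = {t | t * E ⊆ E}`, and `M ⊆ E`. As `G` is closed under multiplication, its additive
span `R` is already a subring, and `G ⊆ R ⊆ M`. The positive units of `R` contain `G`, which is
closed under inversion, and they are positive units of `M`, hence lie in `G`.
-/

/-- The positive inner multiplier group of an additive subgroup `E` of `ℝ`:
`IM₊(E) = {t > 0 | t ∈ E, t⁻¹ ∈ E, tE = E}`. -/
def IMplus (E : AddSubgroup ℝ) : Set ℝ :=
  {t : ℝ | 0 < t ∧ t ∈ E ∧ t⁻¹ ∈ E ∧ (fun x => t * x) '' (E : Set ℝ) = (E : Set ℝ)}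

open scoped Pointwise

section Ring

variable {R : Type*} [Ring R]

theorem toAddSubgroup_subringClosure_submonoid (G : Submonoid R) :
    (Subring.closure (G : Set R)).toAddSubgroup = AddSubgroup.closure (G : Set R) := by
  ext x
  rw [Subring.mem_toAddSubgroup, Subring.mem_closure_iff, Submonoid.closure_eq]

/-- The multiplier ring `{t | t * E ⊆ E}` of an additive subgroup `E` of a ring, with multipliers
acting on the left. -/
def multiplierSubring (E : AddSubgroup R) : Subring R where
  carrier := {t | ∀ x ∈ E, t * x ∈ E}
  one_mem' x hx := by rwa [one_mul]
  mul_mem' {s t} hs ht x hx := by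
    rw [mul_assoc]
    exact hs _ (ht x hx)
  zero_mem' x _ := by
    rw [zero_mul]
    exact E.zero_mem
  add_mem' {s t} hs ht x hx := by
    rw [add_mul]
    exact E.add_mem (hs x hx) (ht x hx)
  neg_mem' {t} ht x hx := by
    rw [neg_mul]
    exact E.neg_mem (ht x hx)

theorem mem_multiplierSubring {E : AddSubgroup R} {t : R} :
    t ∈ multiplierSubring E ↔ ∀ x ∈ E, t * x ∈ E :=
  Iff.rfl

theorem mem_multiplierSubring_iff_smul_subset {E : AddSubgroup R} {t : R} :
    t ∈ multiplierSubring E ↔ t • (E : Set R) ⊆ E :=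
  Set.image_subset_iff.symm

theorem multiplierSubring_le {E : AddSubgroup R} (h_one : (1 : R) ∈ E) :
    (multiplierSubring E).toAddSubgroup ≤ E := fun t ht => by
  simpa only [mul_one] using mem_multiplierSubring.1 ht 1 h_one

end Ring

theorem smul_eq_self_iff_mem_multiplierSubring {K : Type*} [DivisionRing K] {E : AddSubgroup K}
    {t : K} (ht : t ≠ 0) :
    t • (E : Set K) = E ↔ t ∈ multiplierSubring E ∧ t⁻¹ ∈ multiplierSubring E := by
  rw [Set.Subset.antisymm_iff, Set.subset_smul_set_iff₀ ht,
    mem_multiplierSubring_iff_smul_subset, mem_multiplierSubring_iff_smul_subset]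

section OrderedDivisionRing

variable {K : Type*} [DivisionRing K] [LinearOrder K]

/-- The positive inner multipliers of an additive subgroup `E` of an ordered division ring; over
`ℝ` this is `IMplus E`. -/
def posInnerMultipliers (E : AddSubgroup K) : Set K :=
  {t | 0 < t ∧ t ∈ E ∧ t⁻¹ ∈ E ∧ (fun x => t * x) '' (E : Set K) = E}

variable [IsStrictOrderedRing K]

/-- The group of positive units of a subring `S` of an ordered division ring `K`, encoded as a
submonoid of `K`. -/
def posUnits (S : Subring K) : Submonoid K where
  carrier := {t | 0 < t ∧ t ∈ S ∧ t⁻¹ ∈ S}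
  one_mem' := ⟨one_pos, S.one_mem, by simpa only [inv_one] using S.one_mem⟩
  mul_mem' := by
    rintro s t ⟨hs_pos, hs, hs_inv⟩ ⟨ht_pos, ht, ht_inv⟩
    refine ⟨mul_pos hs_pos ht_pos, S.mul_mem hs ht, ?_⟩
    rw [mul_inv_rev]
    exact S.mul_mem ht_inv hs_inv

theorem mem_posUnits {S : Subring K} {t : K} : t ∈ posUnits S ↔ 0 < t ∧ t ∈ S ∧ t⁻¹ ∈ S :=
  Iff.rfl

theorem inv_mem_posUnits {S : Subring K} {t : K} (ht : t ∈ posUnits S) : t⁻¹ ∈ posUnits S := by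
  obtain ⟨ht_pos, ht_mem, ht_inv⟩ := mem_posUnits.1 ht
  exact ⟨inv_pos.2 ht_pos, ht_inv, by rwa [inv_inv]⟩

theorem posUnits_mono {S T : Subring K} (h : S ≤ T) : posUnits S ≤ posUnits T :=
  fun _ ht => ⟨ht.1, h ht.2.1, h ht.2.2⟩

theorem closure_posUnits_le (S : Subring K) : Subring.closure (posUnits S : Set K) ≤ S :=
  Subring.closure_le.2 fun _ ht => ht.2.1

theorem posUnits_closure_posUnits (S : Subring K) :
    posUnits (Subring.closure (posUnits S : Set K)) = posUnits S := by
  refine le_antisymm (posUnits_mono (closure_posUnits_le S)) fun t ht => ?_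
  exact ⟨ht.1, Subring.subset_closure ht, Subring.subset_closure (inv_mem_posUnits ht)⟩

theorem posInnerMultipliers_eq_posUnits {E : AddSubgroup K} (h_one : (1 : K) ∈ E) :
    posInnerMultipliers E = posUnits (multiplierSubring E) := by
  ext t
  constructor
  · rintro ⟨ht_pos, -, -, ht_image⟩
    exact ⟨ht_pos, (smul_eq_self_iff_mem_multiplierSubring ht_pos.ne').1 ht_image⟩
  · rintro ⟨ht_pos, ht, ht_inv⟩
    exact ⟨ht_pos, multiplierSubring_le h_one ht, multiplierSubring_le h_one ht_inv,
      (smul_eq_self_iff_mem_multiplierSubring ht_pos.ne').2 ⟨ht, ht_inv⟩⟩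

theorem IMplus_eq_posUnits_of_subring_general {E : AddSubgroup K} (h_one : (1 : K) ∈ E) :
    (1 : K) ∈ AddSubgroup.closure (posInnerMultipliers E) ∧
    (∀ x ∈ AddSubgroup.closure (posInnerMultipliers E),
      ∀ y ∈ AddSubgroup.closure (posInnerMultipliers E),
        x * y ∈ AddSubgroup.closure (posInnerMultipliers E)) ∧
    (∀ x ∈ AddSubgroup.closure (posInnerMultipliers E), x ∈ E) ∧
    posInnerMultipliers E = {t : K | 0 < t ∧ t ∈ AddSubgroup.closure (posInnerMultipliers E) ∧
      t⁻¹ ∈ AddSubgroup.closure (posInnerMultipliers E)} := by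
  let M := multiplierSubring E
  let R := Subring.closure (posUnits M : Set K)
  have hG : posInnerMultipliers E = posUnits M := posInnerMultipliers_eq_posUnits h_one
  have hR : AddSubgroup.closure (posInnerMultipliers E) = R.toAddSubgroup := by
    rw [hG, toAddSubgroup_subringClosure_submonoid]
  have hGR : posInnerMultipliers E = posUnits R := by rw [hG, posUnits_closure_posUnits]
  rw [hR]
  exact ⟨R.one_mem, fun _ hx _ hy => R.mul_mem hx hy,
    fun _ hx => multiplierSubring_le h_one (closure_posUnits_le M hx), hGR⟩

end OrderedDivisionRing

/-- for an additive subgroup `E` of `ℝ` containing `ℤ`, the additive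
subgroup `R_E` generated by `G = IM₊(E)` (the set of finite `ℤ`-linear combinations of
elements of `G`) is a unital subring of `ℝ` contained in `E`, and `IM₊(E)` equals the
group of positive invertible elements of `R_E`. -/
theorem IMplus_eq_posUnits_of_subring
    (E : AddSubgroup ℝ) (hE : ∀ n : ℤ, (n : ℝ) ∈ E) :
    (1 : ℝ) ∈ AddSubgroup.closure (IMplus E) ∧
    (∀ x ∈ AddSubgroup.closure (IMplus E), ∀ y ∈ AddSubgroup.closure (IMplus E),
      x * y ∈ AddSubgroup.closure (IMplus E)) ∧
    (∀ x ∈ AddSubgroup.closure (IMplus E), x ∈ E) ∧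
    IMplus E = {t : ℝ | 0 < t ∧ t ∈ AddSubgroup.closure (IMplus E) ∧
      t⁻¹ ∈ AddSubgroup.closure (IMplus E)} :=
  IMplus_eq_posUnits_of_subring_general (by simpa only [Int.cast_one] using hE 1)
end
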